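/- Let D ⊂ ℂ be a bounded domain admitting a C^∞ defining function, let p ∈ ∂D, and let F : D → D be a holomorphic map. If F(z₀) = z₀ for some z₀ ∈ D and F(z) = z + o(|z−p|) as z → p within D, then F(z) = z for all z ∈ D. -/

import Mathlib

open Complex Topology Filter Metric Set Function

noncomputable section

/-!
Let `f` be the Blaschke factor of the exterior of a disc touching `D` at `p` from outside, with zero
`z₀`: it is bounded by `1` on `D`, vanishes at `z₀`, and has modulus `1` at `p`. The Birkhoff
averages of `f` along `F` subconverge to an `F`-invariant holomorphic function `P`. Since `F` is
tangent to the identity at `p`, every average agrees with `f` to first order there, so the moduli of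
the averages decay from `1` at `p` at a rate bounded uniformly in the number of iterates. If `P`
were zero, the averages would become arbitrarily small inside a disc touching `∂D` at `p` from
inside, and the Hopf lemma would make these rates unbounded. So `P` is nonconstant. In a coordinate
at `z₀` in which `P - P z₀` is a `k`-th power, invariance of `P` makes `F` multiplication by a
`k`-th root of unity, whence `F^[k]` is the identity. Then the average of the first `k` iterates of
`F` is an `F`-invariant map tangent to the identity at `p`; it is injective near `p` at a scale
comparable to the distance to `p`, which forces `F` to be the identity.
-/

section TangentBall

/-- The one-sided ball condition at `p`: some ball contained in `s` has `p` on its boundary sphere.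
It is the interior ball condition for `s` and the exterior one for the complement of `s`. -/
def HasTangentBall {X : Type*} [MetricSpace X] (s : Set X) (p : X) : Prop :=
  ∃ c, c ≠ p ∧ ball c (dist p c) ⊆ s

theorem isBigO_sub_sub_fderiv_norm_sq {E G : Type*} [NormedAddCommGroup E] [NormedSpace ℝ E]
    [NormedAddCommGroup G] [NormedSpace ℝ G] {f : E → G} {p : E} (hf : ContDiffAt ℝ 2 f p) :
    (fun z => f z - f p - fderiv ℝ f p (z - p)) =O[𝓝 p] fun z => ‖z - p‖ ^ 2 := by
  obtain ⟨K, U, hU, hK⟩ := (hf.fderiv_right (m := 1) (by norm_num)).exists_lipschitzOnWith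
  have hdiff : ∀ᶠ z in 𝓝 p, DifferentiableAt ℝ f z :=
    (hf.eventually (by simp)).mono fun z hz => hz.differentiableAt (by norm_num)
  obtain ⟨δ, hδ, hball⟩ := Metric.mem_nhds_iff.1 (inter_mem hU hdiff)
  refine .of_bound K ?_
  filter_upwards [ball_mem_nhds p hδ] with z hz
  have hsub : closedBall p ‖z - p‖ ⊆ U ∩ {z | DifferentiableAt ℝ f z} :=
    (closedBall_subset_ball (mem_ball_iff_norm.1 hz)).trans hball
  have hmean := (convex_closedBall p ‖z - p‖).norm_image_sub_le_of_norm_fderiv_le' (𝕜 := ℝ)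
    (f := f) (φ := fderiv ℝ f p) (C := K * ‖z - p‖) (fun x hx => (hsub hx).2)
    (fun x hx => (hK.norm_sub_le (hsub hx).1 (mem_of_mem_nhds hU)).trans
      (by gcongr; exact mem_closedBall_iff_norm.1 hx))
    (mem_closedBall_self (norm_nonneg _)) (mem_closedBall_iff_norm.2 le_rfl)
  rwa [norm_pow, norm_norm, sq, ← mul_assoc]

/-- The centres of the balls are the points `p + τ • ∇ρ(p)` with `τ > 0` small. -/
theorem hasTangentBall_of_contDiffAt {E : Type*} [NormedAddCommGroup E] [InnerProductSpace ℝ E]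
    [CompleteSpace E] {ρ : E → ℝ} {p : E} {s : Set E} (hρ : ContDiffAt ℝ 2 ρ p) (hp : ρ p = 0)
    (hd : fderiv ℝ ρ p ≠ 0) (hs : ∀ᶠ z in 𝓝 p, 0 < ρ z → z ∈ s) : HasTangentBall s p := by
  set g := gradient ρ p
  have hg : g ≠ 0 := fun h => hd (by rw [← toDual_gradient, show gradient ρ p = 0 from h, map_zero])
  have hinner : ∀ v, fderiv ℝ ρ p v = inner ℝ g v := fun v => by
    rw [← toDual_gradient, InnerProductSpace.toDual_apply_apply]
  obtain ⟨C, hC, htaylor⟩ := (isBigO_sub_sub_fderiv_norm_sq hρ).exists_pos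
  obtain ⟨δ, hδ, hball⟩ := Metric.eventually_nhds_iff.1 (htaylor.bound.and hs)
  obtain ⟨τ, hτ, hτC, hτδ⟩ : ∃ τ > 0, τ * (2 * C) ≤ 1 ∧ τ * (2 * ‖g‖) ≤ δ := by
    have : 0 < ‖g‖ := norm_pos_iff.2 hg
    refine ⟨min (1 / (2 * C)) (δ / (2 * ‖g‖)), by positivity, ?_, ?_⟩
    · exact (le_div_iff₀ (by positivity)).1 (min_le_left _ _)
    · exact (le_div_iff₀ (by positivity)).1 (min_le_right _ _)
  refine ⟨p + τ • g, by simpa using ⟨hτ.ne', hg⟩, fun z hz => ?_⟩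
  have hlt : ‖(z - p) - τ • g‖ < τ * ‖g‖ := by
    simpa [dist_eq_norm, norm_smul, abs_of_pos hτ, sub_sub] using hz
  have hsq : ‖z - p‖ ^ 2 < 2 * τ * inner ℝ g (z - p) := by
    have := pow_lt_pow_left₀ hlt (norm_nonneg _) two_ne_zero
    rw [norm_sub_sq_real, inner_smul_right, real_inner_comm, norm_smul,
      Real.norm_of_nonneg hτ.le] at this
    linarith
  have hnear : dist z p < δ := by
    have := norm_add_le (z - p - τ • g) (τ • g)
    rw [sub_add_cancel, norm_smul, Real.norm_of_nonneg hτ.le] at this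
    rw [dist_eq_norm]
    linarith
  obtain ⟨hbound, hmem⟩ := hball hnear
  rw [hp, sub_zero, hinner, norm_pow, norm_norm, Real.norm_eq_abs, abs_le] at hbound
  refine hmem (pos_of_mul_pos_right (b := ρ z) (a := 2 * τ) ?_ (by positivity))
  nlinarith [mul_le_mul_of_nonneg_right hτC (sq_nonneg ‖z - p‖),
    mul_le_mul_of_nonneg_left hbound.1 hτ.le]

variable {E : Type*} [NormedAddCommGroup E] [NormedSpace ℝ E] {p c : E}

theorem tendsto_lineMap_nhdsWithin_ball (hc : c ≠ p) :
    Tendsto (AffineMap.lineMap p c : ℝ → E) (𝓝[>] 0) (𝓝[ball c (dist p c)] p) := by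
  refine tendsto_nhdsWithin_iff.2 ⟨?_, ?_⟩
  · have hcont : Continuous (AffineMap.lineMap p c : ℝ → E) := AffineMap.lineMap_continuous
    simpa using (hcont.tendsto 0).mono_left nhdsWithin_le_nhds
  · filter_upwards [Ioo_mem_nhdsGT one_pos] with t ht
    rw [mem_ball, dist_lineMap_right, Real.norm_of_nonneg (sub_nonneg.2 ht.2.le)]
    exact mul_lt_of_lt_one_left (dist_pos.2 hc.symm) (by linarith [ht.1])

theorem HasTangentBall.frequently_eventually_ball_subset {s : Set E} (hs : HasTangentBall s p) :
    ∃ᶠ z in 𝓝 p, ∀ᶠ w in 𝓝 z, w ≠ p ∧ ball w (dist w p / 2) ⊆ s := by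
  obtain ⟨c, hc, hcs⟩ := hs
  have htend := (tendsto_lineMap_nhdsWithin_ball hc).mono_right nhdsWithin_le_nhds
  refine htend.frequently (Eventually.frequently ?_)
  filter_upwards [Ioo_mem_nhdsGT one_pos] with t ht
  have hzp := dist_lineMap_left (𝕜 := ℝ) p c t
  have hzc := dist_lineMap_right (𝕜 := ℝ) p c t
  rw [Real.norm_of_nonneg ht.1.le] at hzp
  rw [Real.norm_of_nonneg (sub_nonneg.2 ht.2.le)] at hzc
  have hr : 0 < t * dist p c := mul_pos ht.1 (dist_pos.2 hc.symm)
  filter_upwards [ball_mem_nhds _ (show 0 < t * dist p c / 4 by positivity)] with w hw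
  rw [mem_ball] at hw
  refine ⟨?_, fun x hx => hcs ?_⟩
  · rintro rfl
    rw [dist_comm] at hw
    linarith
  · have := dist_triangle4 x w (AffineMap.lineMap p c t) c
    have := dist_triangle w (AffineMap.lineMap p c t) p
    rw [mem_ball] at hx ⊢
    linarith

end TangentBall

section TangentToIdentity

variable {E : Type*} [NormedAddCommGroup E] {D : Set E} {F : E → E} {p : E}

theorem tendsto_nhdsWithin_self_of_sub_isLittleO (hmaps : MapsTo F D D)
    (ho : (fun z => F z - z) =o[𝓝[D] p] fun z => z - p) : Tendsto F (𝓝[D] p) (𝓝[D] p) := by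
  have hid : Tendsto id (𝓝[D] p) (𝓝 p) := tendsto_id.mono_left nhdsWithin_le_nhds
  refine tendsto_nhdsWithin_iff.2 ⟨?_, mem_of_superset self_mem_nhdsWithin hmaps⟩
  simpa using (ho.trans_tendsto (tendsto_sub_nhds_zero_iff.2 hid)).add hid

theorem isBigO_sub_of_sub_isLittleO (ho : (fun z => F z - z) =o[𝓝[D] p] fun z => z - p) :
    (fun z => F z - p) =O[𝓝[D] p] fun z => z - p := by
  simpa using ho.isBigO.add (Asymptotics.isBigO_refl (fun z => z - p) _)

theorem iterate_sub_isLittleO (hmaps : MapsTo F D D)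
    (ho : (fun z => F z - z) =o[𝓝[D] p] fun z => z - p) (n : ℕ) :
    (fun z => F^[n] z - z) =o[𝓝[D] p] fun z => z - p := by
  induction n with
  | zero => simp
  | succ n ih =>
    have hstep := (ho.comp_tendsto (tendsto_nhdsWithin_self_of_sub_isLittleO
      (hmaps.iterate n) ih)).trans_isBigO (isBigO_sub_of_sub_isLittleO ih)
    simpa [comp_def, iterate_succ_apply'] using hstep.add ih

theorem birkhoffAverage_sub_isLittleO {𝕜 G : Type*} [RCLike 𝕜] [NormedSpace 𝕜 E]
    [NormedAddCommGroup G] [NormedSpace 𝕜 G] {f : E → G} {f' : E →L[𝕜] G}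
    (hf : HasStrictFDerivAt f f' p) (hmaps : MapsTo F D D)
    (ho : (fun z => F z - z) =o[𝓝[D] p] fun z => z - p) {N : ℕ} (hN : N ≠ 0) :
    (fun z => birkhoffAverage 𝕜 F f N z - f z) =o[𝓝[D] p] fun z => z - p := by
  have hterm (n : ℕ) : (fun z => f (F^[n] z) - f z) =o[𝓝[D] p] fun z => z - p := by
    have hn := iterate_sub_isLittleO hmaps ho n
    have htend : Tendsto (fun z => (F^[n] z, z)) (𝓝[D] p) (𝓝 (p, p)) :=
      ((tendsto_nhdsWithin_self_of_sub_isLittleO (hmaps.iterate n) hn).mono_right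
        nhdsWithin_le_nhds).prodMk_nhds (tendsto_id.mono_left nhdsWithin_le_nhds)
    exact (hf.isBigO_sub.comp_tendsto htend).trans_isLittleO hn
  have hN' : (N : 𝕜) ≠ 0 := Nat.cast_ne_zero.2 hN
  refine ((Asymptotics.IsLittleO.fun_sum (s := Finset.range N) fun n _ =>
    hterm n).const_smul_left (N : 𝕜)⁻¹).congr_left fun z => ?_
  rw [Pi.smul_apply, Finset.sum_sub_distrib, smul_sub, Finset.sum_const, Finset.card_range,
    ← Nat.cast_smul_eq_nsmul 𝕜, inv_smul_smul₀ hN']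
  rfl

end TangentToIdentity

section Montel

variable {E G ι : Type*} [NormedAddCommGroup E] [NormedSpace ℂ E] [NormedAddCommGroup G]
  [NormedSpace ℂ G] {D : Set E} {M : ℝ}

theorem equicontinuousOn_of_differentiableOn_of_norm_le {f : ι → E → G} (hD : IsOpen D)
    (hf : ∀ i, DifferentiableOn ℂ (f i) D) (hM : ∀ i, ∀ z ∈ D, ‖f i z‖ ≤ M) :
    EquicontinuousOn f D := by
  intro z hz
  obtain ⟨R, hR, hRD⟩ := Metric.isOpen_iff.1 hD z hz
  have hbound : Tendsto (fun w => 2 * M / R * dist w z) (𝓝 z) (𝓝 0) := by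
    exact (by fun_prop : Continuous fun w => 2 * M / R * dist w z).tendsto' z 0 (by simp)
  refine (Metric.equicontinuousAt_of_continuity_modulus _ hbound f ?_).equicontinuousWithinAt D
  filter_upwards [ball_mem_nhds z hR] with w hw i
  rw [dist_comm]
  refine Complex.dist_le_div_mul_dist_of_mapsTo_ball ((hf i).mono hRD) (fun x hx => ?_) hw
  rw [mem_closedBall_iff_norm]
  linarith [norm_sub_le (f i x) (f i z), hM i x (hRD hx), hM i z hz]

theorem exists_tendstoLocallyUniformlyOn_ultrafilter [ProperSpace E] [ProperSpace G]
    (U : Ultrafilter ι) {f : ι → E → G} (hD : IsOpen D)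
    (hf : ∀ i, DifferentiableOn ℂ (f i) D) (hM : ∀ i, ∀ z ∈ D, ‖f i z‖ ≤ M) :
    ∃ g, TendstoLocallyUniformlyOn f g U D := by
  have hlim (z : E) (hz : z ∈ D) : ∃ y, Tendsto (fun i => f i z) U (𝓝 y) := by
    obtain ⟨y, -, hy⟩ := (isCompact_closedBall (0 : G) M).ultrafilter_le_nhds'
      (U.map fun i => f i z) (mem_map.2 <| univ_mem' fun i => by simpa using hM i z hz)
    exact ⟨y, hy⟩
  choose! g hg using hlim
  refine ⟨g, (tendstoLocallyUniformlyOn_iff_forall_isCompact hD).2 fun K hKD hK => ?_⟩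
  have hequi := (equicontinuousOn_of_differentiableOn_of_norm_le hD hf hM).mono hKD
  have := (EquicontinuousOn.tendsto_uniformOnFun_iff_pi' (𝔖 := {K}) (by simpa using hK)
    (by simpa using hequi) U g).2 ?_
  · exact UniformOnFun.tendsto_iff_tendstoUniformlyOn.1 this K rfl
  · rw [tendsto_pi_nhds]
    rintro ⟨z, hz⟩
    exact hg z (hKD (by simpa using hz))

end Montel

section BirkhoffAverage

theorem differentiableOn_birkhoffAverage {E G : Type*} [NormedAddCommGroup E] [NormedSpace ℂ E]
    [NormedAddCommGroup G] [NormedSpace ℂ G] {D : Set E} {F : E → E} {f : E → G}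
    (hF : DifferentiableOn ℂ F D) (hmaps : MapsTo F D D) (hf : DifferentiableOn ℂ f D) (n : ℕ) :
    DifferentiableOn ℂ (birkhoffAverage ℂ F f n) D :=
  (DifferentiableOn.fun_sum fun k _ =>
    hf.comp (hF.iterate hmaps k) (hmaps.iterate k)).const_smul (n : ℂ)⁻¹

variable {X G : Type*} [NormedAddCommGroup G] [NormedSpace ℂ G] {D : Set X} {F : X → X}
  {f : X → G} {M : ℝ}

theorem norm_birkhoffAverage_le (hmaps : MapsTo F D D) (hM : ∀ z ∈ D, ‖f z‖ ≤ M) (n : ℕ) {z : X}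
    (hz : z ∈ D) : ‖birkhoffAverage ℂ F f n z‖ ≤ M := by
  rcases Nat.eq_zero_or_pos n with rfl | hn
  · simpa using (norm_nonneg _).trans (hM z hz)
  · rw [birkhoffAverage, birkhoffSum, norm_smul, norm_inv, Complex.norm_natCast,
      inv_mul_le_iff₀ (Nat.cast_pos.2 hn)]
    exact (norm_sum_le_of_le _ fun k _ => hM _ (hmaps.iterate k hz)).trans_eq (by simp)

theorem apply_eq_of_tendsto_birkhoffAverage {l : Filter ℕ} [l.NeBot] (hl : l ≤ atTop)
    (hmaps : MapsTo F D D) (hM : ∀ z ∈ D, ‖f z‖ ≤ M) {P : X → G}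
    (hP : ∀ z ∈ D, Tendsto (fun n => birkhoffAverage ℂ F f n z) l (𝓝 (P z))) {z : X} (hz : z ∈ D) :
    P (F z) = P z := by
  have hbdd : Bornology.IsBounded (range fun n => f (F^[n] z)) :=
    isBounded_iff_forall_norm_le.2 ⟨M, forall_mem_range.2 fun n => hM _ (hmaps.iterate n hz)⟩
  exact sub_eq_zero.1 <| tendsto_nhds_unique ((hP _ (hmaps hz)).sub (hP z hz))
    ((tendsto_birkhoffAverage_apply_sub_birkhoffAverage ℂ hbdd).mono_left hl)

theorem exists_invariant_limit_birkhoffAverage {D : Set ℂ} (hD : IsOpen D) {F f : ℂ → ℂ} {M : ℝ}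
    (hF : DifferentiableOn ℂ F D) (hmaps : MapsTo F D D) (hf : DifferentiableOn ℂ f D)
    (hM : ∀ z ∈ D, ‖f z‖ ≤ M) :
    ∃ l : Filter ℕ, ∃ P, l.NeBot ∧ l ≤ atTop ∧ DifferentiableOn ℂ P D ∧
      TendstoLocallyUniformlyOn (birkhoffAverage ℂ F f) P l D ∧ ∀ z ∈ D, P (F z) = P z := by
  have hdiff := differentiableOn_birkhoffAverage hF hmaps hf
  obtain ⟨P, hP⟩ := exists_tendstoLocallyUniformlyOn_ultrafilter (hyperfilter ℕ) hD hdiff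
    fun n _ => norm_birkhoffAverage_le hmaps hM n
  exact ⟨hyperfilter ℕ, P, inferInstance, Nat.hyperfilter_le_atTop,
    hP.differentiableOn (Eventually.of_forall hdiff) hD, hP, fun _ =>
      apply_eq_of_tendsto_birkhoffAverage Nat.hyperfilter_le_atTop hmaps hM fun _ => hP.tendsto_at⟩

end BirkhoffAverage

section InvariantGerm

theorem exists_analyticAt_pow_eq {g : ℂ → ℂ} {z₀ : ℂ} (hg : AnalyticAt ℂ g z₀) (hg₀ : g z₀ ≠ 0)
    {k : ℕ} (hk : k ≠ 0) : ∃ h, AnalyticAt ℂ h z₀ ∧ ∀ z, h z ^ k = g z := by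
  refine ⟨fun z => g z₀ ^ (k⁻¹ : ℂ) * (g z / g z₀) ^ (k⁻¹ : ℂ), ?_, fun z => ?_⟩
  · exact analyticAt_const.mul <| (hg.div analyticAt_const hg₀).cpow analyticAt_const <| by
      simp [div_self hg₀]
  · rw [mul_pow, cpow_nat_inv_pow _ hk, cpow_nat_inv_pow _ hk, mul_div_cancel₀ _ hg₀]

theorem exists_sub_eventuallyEq_pow {P : ℂ → ℂ} {z₀ : ℂ} (hP : AnalyticAt ℂ P z₀)
    (hne : ¬ ∀ᶠ z in 𝓝 z₀, P z = P z₀) :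
    ∃ (k : ℕ) (Q : ℂ → ℂ), k ≠ 0 ∧ AnalyticAt ℂ Q z₀ ∧ Q z₀ = 0 ∧ deriv Q z₀ ≠ 0 ∧
      ∀ᶠ z in 𝓝 z₀, P z - P z₀ = Q z ^ k := by
  obtain ⟨k, g, hg, hg₀, hPg⟩ :=
    (hP.fun_sub analyticAt_const).exists_eventuallyEq_pow_smul_nonzero_iff.2
      (by simpa only [sub_eq_zero] using hne)
  have hk : k ≠ 0 := by
    rintro rfl
    exact hg₀ (by simpa using hPg.self_of_nhds.symm)
  obtain ⟨h, hh, hhk⟩ := exists_analyticAt_pow_eq hg hg₀ hk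
  have hQ : HasDerivAt (fun z => (z - z₀) * h z) (h z₀) z₀ := by
    simpa using ((hasDerivAt_id z₀).sub_const z₀).fun_mul hh.differentiableAt.hasDerivAt
  refine ⟨k, fun z => (z - z₀) * h z, hk, by fun_prop, by simp, ?_, ?_⟩
  · rw [hQ.deriv]
    intro h0
    exact hg₀ (by rw [← hhk, h0, zero_pow hk])
  · filter_upwards [hPg] with z hz
    rw [hz, smul_eq_mul, mul_pow, hhk]

/-- The ratio `Q (F z) / Q z` is continuous with values in the finite set of `k`-th roots of unity,
so it is constant. -/
theorem eventually_comp_eq_deriv_mul {F Q : ℂ → ℂ} {z₀ : ℂ} {k : ℕ} (hk : k ≠ 0)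
    (hF : DifferentiableAt ℂ F z₀) (hfix : F z₀ = z₀) (hQ : DifferentiableAt ℂ Q z₀)
    (hQ₀ : Q z₀ = 0) (hQ' : deriv Q z₀ ≠ 0) (hinv : ∀ᶠ z in 𝓝 z₀, Q (F z) ^ k = Q z ^ k) :
    deriv F z₀ ^ k = 1 ∧ ∀ᶠ z in 𝓝 z₀, Q (F z) = deriv F z₀ * Q z := by
  have hQF : HasDerivAt (Q ∘ F) (deriv Q z₀ * deriv F z₀) z₀ :=
    HasDerivAt.comp z₀ (by rw [hfix]; exact hQ.hasDerivAt) hF.hasDerivAt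
  have hratio : Tendsto (fun z => Q (F z) / Q z) (𝓝[≠] z₀) (𝓝 (deriv F z₀)) := by
    have := hQF.tendsto_slope.div hQ.hasDerivAt.tendsto_slope hQ'
    rw [mul_div_cancel_left₀ _ hQ'] at this
    refine this.congr' (eventually_mem_nhdsWithin.mono fun z hz => ?_)
    simp [slope_def_field, hfix, hQ₀, div_div_div_cancel_right₀ (sub_ne_zero.2 hz)]
  have hQne : ∀ᶠ z in 𝓝[≠] z₀, Q z ≠ 0 := hQ.hasDerivAt.eventually_ne hQ'
  have hroots : ∀ᶠ z in 𝓝[≠] z₀, (Q (F z) / Q z) ^ k = 1 := by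
    filter_upwards [hQne, hinv.filter_mono nhdsWithin_le_nhds] with z hz hinvz
    rw [div_pow, hinvz, div_self (pow_ne_zero k hz)]
  have hfin : {w : ℂ | w ^ k = 1}.Finite :=
    (Polynomial.nthRootsFinset k (1 : ℂ)).finite_toSet.subset fun w hw =>
      (Polynomial.mem_nthRootsFinset (Nat.pos_of_ne_zero hk) 1).2 hw
  have heq : ∀ᶠ z in 𝓝[≠] z₀, Q (F z) / Q z = deriv F z₀ := by
    have hclosed := (hfin.sdiff (t := {deriv F z₀})).isClosed
    filter_upwards [hroots, hratio.eventually (hclosed.compl_mem_nhds (by simp))] with z hz hz'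
    by_contra hcon
    exact hz' ⟨hz, hcon⟩
  refine ⟨?_, eventually_nhdsWithin_iff.1 (hQne.and heq) |>.mono fun z hz => ?_⟩
  · obtain ⟨z, hz, hz'⟩ := (hroots.and heq).exists
    rwa [hz'] at hz
  · rcases eq_or_ne z z₀ with rfl | hne
    · simp [hfix, hQ₀]
    · exact (div_eq_iff (hz hne).1).1 (hz hne).2

theorem exists_iterate_eventuallyEq_id_of_invariant {F P : ℂ → ℂ} {z₀ : ℂ}
    (hF : DifferentiableAt ℂ F z₀) (hfix : F z₀ = z₀) (hP : AnalyticAt ℂ P z₀)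
    (hinv : ∀ᶠ z in 𝓝 z₀, P (F z) = P z) (hne : ¬ ∀ᶠ z in 𝓝 z₀, P z = P z₀) :
    ∃ k ≠ 0, F^[k] =ᶠ[𝓝 z₀] id := by
  obtain ⟨k, Q, hk, hQ, hQ₀, hQ', hPQ⟩ := exists_sub_eventuallyEq_pow hP hne
  have hFt : Tendsto F (𝓝 z₀) (𝓝 z₀) := by simpa [ContinuousAt, hfix] using hF.continuousAt
  obtain ⟨hroot, hlin⟩ := eventually_comp_eq_deriv_mul hk hF hfix hQ.differentiableAt hQ₀ hQ' <| by
    filter_upwards [hPQ, hFt.eventually hPQ, hinv] with z hz hFz hz'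
    rw [← hFz, hz', hz]
  have hiter (n : ℕ) : ∀ᶠ z in 𝓝 z₀, Q (F^[n] z) = deriv F z₀ ^ n * Q z := by
    induction n with
    | zero => simp
    | succ n ih =>
      filter_upwards [hlin, hFt.eventually ih] with z hz hFz
      rw [iterate_succ_apply, hFz, hz, pow_succ, mul_assoc]
  have hinj := hQ.hasStrictDerivAt.eventually_left_inverse hQ'
  refine ⟨k, hk, ?_⟩
  filter_upwards [hiter k, hinj, (hFt.iterate k).eventually hinj] with z hz hleft hleft'
  rw [← hleft', hz, hroot, one_mul, hleft, id]

end InvariantGerm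

section ThreeCircles

variable {E : Type*} [NormedAddCommGroup E] [NormedSpace ℂ E] {g : ℂ → E} {c : ℂ} {k : ℕ}

theorem norm_le_mul_dist_pow_of_annulus {s R C : ℝ} (hs : 0 < s)
    (hg : DifferentiableOn ℂ g (closedBall c R \ ball c s))
    (hinner : ∀ z ∈ sphere c s, ‖g z‖ ≤ C * s ^ k) (houter : ∀ z ∈ sphere c R, ‖g z‖ ≤ C * R ^ k)
    {z : ℂ} (hz : z ∈ closedBall c R \ ball c s) : ‖g z‖ ≤ C * dist z c ^ k := by
  set A := closedBall c R \ ball c s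
  have hA : IsClosed A := isClosed_closedBall.sdiff isOpen_ball
  have hpos : ∀ w ∈ A, 0 < dist w c := fun w hw => hs.trans_le (not_lt.1 hw.2)
  have hquot (w : ℂ) (hw : w ∈ A) : ‖((w - c) ^ k)⁻¹ • g w‖ ≤ C ↔ ‖g w‖ ≤ C * dist w c ^ k := by
    rw [norm_smul, norm_inv, norm_pow, ← dist_eq_norm, inv_mul_le_iff₀ (pow_pos (hpos w hw) k),
      mul_comm]
  have hdiff : DifferentiableOn ℂ (fun w => ((w - c) ^ k)⁻¹ • g w) A := by
    refine DifferentiableOn.smul (DifferentiableOn.inv (by fun_prop) fun w hw => ?_) hg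
    exact pow_ne_zero k (sub_ne_zero.2 (dist_pos.1 (hpos w hw)))
  have hfrontier : frontier A ⊆ sphere c s ∪ sphere c R := by
    rw [show A = closedBall c R ∩ (ball c s)ᶜ from rfl]
    refine (frontier_inter_subset _ _).trans (union_comm _ _ ▸ union_subset_union ?_ ?_)
    · rw [frontier_compl]
      exact inter_subset_right.trans frontier_ball_subset_sphere
    · exact inter_subset_left.trans frontier_closedBall_subset_sphere
  refine (hquot z hz).1 <| Complex.norm_le_of_forall_mem_frontier_norm_le
    (isBounded_closedBall.subset sdiff_subset) (hA.diffContOnCl_iff.2 hdiff) (fun w hw => ?_)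
    (subset_closure hz)
  refine (hquot w (hA.frontier_subset hw)).2 ?_
  rcases hfrontier hw with hw | hw
  · exact (mem_sphere.1 hw).symm ▸ hinner w hw
  · exact (mem_sphere.1 hw).symm ▸ houter w hw

theorem norm_le_dist_div_pow {s r : ℝ} (hs : 0 < s) (hg : DifferentiableOn ℂ g (ball c r))
    (h1 : ∀ z ∈ ball c r, ‖g z‖ ≤ 1) (hinner : ∀ z ∈ sphere c s, ‖g z‖ ≤ (s / r) ^ k)
    {z : ℂ} (hz : z ∈ ball c r) (hsz : s ≤ dist z c) : ‖g z‖ ≤ (dist z c / r) ^ k := by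
  have hr : 0 < r := nonempty_ball.1 ⟨z, hz⟩
  have hlim : Tendsto (fun R : ℝ => (dist z c / R) ^ k) (𝓝[<] r) (𝓝 ((dist z c / r) ^ k)) :=
    (tendsto_const_nhds.div (tendsto_id.mono_left nhdsWithin_le_nhds) hr.ne').pow k
  refine ge_of_tendsto hlim ?_
  filter_upwards [Ioo_mem_nhdsLT (mem_ball.1 hz)] with R hR
  have hR0 : 0 < R := dist_nonneg.trans_lt hR.1
  have hsub : closedBall c R ⊆ ball c r := closedBall_subset_ball hR.2
  rw [div_pow, div_eq_inv_mul]
  refine norm_le_mul_dist_pow_of_annulus hs (hg.mono (sdiff_subset.trans hsub)) ?_ ?_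
    ⟨mem_closedBall.2 hR.1.le, not_lt.2 hsz⟩
  · intro w hw
    refine (hinner w hw).trans ?_
    rw [← div_eq_inv_mul, ← div_pow]
    gcongr
    exact hR.2.le
  · intro w hw
    rw [inv_mul_cancel₀ (pow_ne_zero k hR0.ne')]
    exact h1 w (hsub (sphere_subset_closedBall hw))

theorem natCast_le_of_eventually_one_sub_mul_le_pow {a : ℝ}
    (h : ∀ᶠ t : ℝ in 𝓝[>] 0, 1 - a * t ≤ (1 - t) ^ k) : (k : ℝ) ≤ a := by
  have hderiv : HasDerivAt (fun t : ℝ => (1 - t) ^ k) (-k) 0 := by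
    simpa using ((hasDerivAt_id (0 : ℝ)).const_sub 1).fun_pow k
  refine neg_le_neg_iff.1 (ge_of_tendsto
    (hderiv.tendsto_slope.mono_left (nhdsGT_le_nhdsNE 0)) ?_)
  filter_upwards [h, self_mem_nhdsWithin] with t ht ht0
  rw [slope_def_field, sub_zero, sub_zero, one_pow, le_div_iff₀ ht0]
  linarith

/-- A quantitative Hopf lemma, read off from three circles along the inner normal at `p`. -/
theorem natCast_le_mul_dist_of_one_sub_le_norm {p : ℂ} {C : ℝ} (hc : c ≠ p)
    (hg : DifferentiableOn ℂ g (ball c (dist p c))) (h1 : ∀ z ∈ ball c (dist p c), ‖g z‖ ≤ 1)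
    (hsmall : ∀ z ∈ sphere c (dist p c / 2), ‖g z‖ ≤ (1 / 2) ^ k)
    (hlower : ∀ᶠ z in 𝓝[ball c (dist p c)] p, 1 - C * dist z p ≤ ‖g z‖) :
    (k : ℝ) ≤ C * dist p c := by
  have hr : 0 < dist p c := dist_pos.2 hc.symm
  refine natCast_le_of_eventually_one_sub_mul_le_pow ?_
  filter_upwards [(tendsto_lineMap_nhdsWithin_ball hc).eventually hlower,
    Ioo_mem_nhdsGT one_half_pos] with t ht htI
  have hzp : dist (AffineMap.lineMap p c t) p = t * dist p c := by
    rw [dist_lineMap_left, Real.norm_of_nonneg htI.1.le]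
  have hzc : dist (AffineMap.lineMap p c t) c = (1 - t) * dist p c := by
    rw [dist_lineMap_right, Real.norm_of_nonneg (by linarith [htI.2])]
  have hupper := norm_le_dist_div_pow (half_pos hr) hg h1
    (by rwa [div_div_cancel_left' hr.ne', ← one_div])
    (z := AffineMap.lineMap p c t) (by rw [mem_ball, hzc]; nlinarith [htI.1])
    (by rw [hzc]; nlinarith [htI.2])
  rw [hzc, mul_div_cancel_right₀ _ hr.ne'] at hupper
  rw [hzp] at ht
  linarith

end ThreeCircles

section ExteriorBlaschke

open scoped ComplexConjugate

/-- The Blaschke factor with zero `a` of the exterior of the disc of centre `e` and radius `s`. -/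
def exteriorBlaschke (e : ℂ) (s : ℝ) (a z : ℂ) : ℂ :=
  s * (z - a) / (s ^ 2 - conj (a - e) * (z - e))

variable {e a z : ℂ} {s : ℝ}

theorem norm_sq_sub_norm_sq_exteriorBlaschke :
    ‖s ^ 2 - conj (a - e) * (z - e)‖ ^ 2 - ‖s * (z - a)‖ ^ 2 =
      (‖z - e‖ ^ 2 - s ^ 2) * (‖a - e‖ ^ 2 - s ^ 2) := by
  have hza : z - a = (z - e) - (a - e) := by ring
  rw [hza]
  simp only [← normSq_eq_norm_sq, normSq_apply]
  simp only [sq, sub_re, sub_im, mul_re, mul_im, conj_re, conj_im, ofReal_re, ofReal_im]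
  ring

theorem exteriorBlaschke_denom_ne_zero (hs : 0 < s) (ha : s < ‖a - e‖) (hz : s ≤ ‖z - e‖) :
    s ^ 2 - conj (a - e) * (z - e) ≠ 0 := by
  refine sub_ne_zero.2 fun h => ?_
  have hnorm : s ^ 2 = ‖a - e‖ * ‖z - e‖ := by
    simpa only [norm_pow, norm_mul, RCLike.norm_conj, norm_real, Real.norm_of_nonneg hs.le]
      using congrArg norm h
  exact (sq s ▸ hnorm).not_lt (mul_lt_mul ha hz hs (norm_nonneg _))

theorem exteriorBlaschke_self : exteriorBlaschke e s a a = 0 := by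
  simp [exteriorBlaschke]

theorem analyticAt_exteriorBlaschke (hs : 0 < s) (ha : s < ‖a - e‖) (hz : s ≤ ‖z - e‖) :
    AnalyticAt ℂ (exteriorBlaschke e s a) z :=
  AnalyticAt.fun_div (by fun_prop) (by fun_prop) (exteriorBlaschke_denom_ne_zero hs ha hz)

theorem norm_exteriorBlaschke_le_one (hs : 0 < s) (ha : s < ‖a - e‖) (hz : s ≤ ‖z - e‖) :
    ‖exteriorBlaschke e s a z‖ ≤ 1 := by
  have hprod : 0 ≤ (‖z - e‖ ^ 2 - s ^ 2) * (‖a - e‖ ^ 2 - s ^ 2) :=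
    mul_nonneg (sub_nonneg.2 (by gcongr)) (sub_nonneg.2 (by gcongr))
  rw [← norm_sq_sub_norm_sq_exteriorBlaschke, sub_nonneg] at hprod
  rw [exteriorBlaschke, norm_div]
  exact div_le_one_of_le₀ (le_of_sq_le_sq hprod (norm_nonneg _)) (norm_nonneg _)

theorem norm_exteriorBlaschke_eq_one (hs : 0 < s) (ha : s < ‖a - e‖) (hz : ‖z - e‖ = s) :
    ‖exteriorBlaschke e s a z‖ = 1 := by
  have hnorm := norm_sq_sub_norm_sq_exteriorBlaschke (e := e) (a := a) (z := z) (s := s)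
  rw [hz, sub_self, zero_mul, sub_eq_zero, sq_eq_sq₀ (norm_nonneg _) (norm_nonneg _)] at hnorm
  rw [exteriorBlaschke, norm_div, ← hnorm, div_self]
  exact norm_ne_zero_iff.2 (exteriorBlaschke_denom_ne_zero hs ha hz.ge)

end ExteriorBlaschke

section InvariantLimit

variable {D : Set ℂ} {F f : ℂ → ℂ} {p : ℂ}

/-- The slope `‖f'‖ + 1` does not depend on the number `N` of iterates that are averaged. -/
theorem eventually_one_sub_mul_dist_le_norm_birkhoffAverage {f' : ℂ →L[ℂ] ℂ}
    (hf : HasStrictFDerivAt f f' p) (hfp : ‖f p‖ = 1) (hmaps : MapsTo F D D)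
    (ho : (fun z => F z - z) =o[𝓝[D] p] fun z => z - p) {N : ℕ} (hN : N ≠ 0) :
    ∀ᶠ z in 𝓝[D] p, 1 - (‖f'‖ + 1) * dist z p ≤ ‖birkhoffAverage ℂ F f N z‖ := by
  have htaylor := (birkhoffAverage_sub_isLittleO hf hmaps ho hN).add
    (hf.hasFDerivAt.isLittleO.mono nhdsWithin_le_nhds)
  filter_upwards [htaylor.bound one_pos] with z hz
  rw [sub_sub, sub_add_sub_cancel, ← sub_sub, one_mul, ← dist_eq_norm z] at hz
  have hslope := f'.le_opNorm (z - p)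
  rw [← dist_eq_norm] at hslope
  have := norm_sub_le (birkhoffAverage ℂ F f N z - f p) (birkhoffAverage ℂ F f N z)
  rw [sub_sub_cancel_left, norm_neg, hfp] at this
  have := norm_add_le (birkhoffAverage ℂ F f N z - f p - f' (z - p)) (f' (z - p))
  rw [sub_add_cancel] at this
  linarith

/-- If the limit vanished, the averages would be small inside the tangent disc, and the Hopf lemma
would make their slopes at `p` unbounded. -/
theorem exists_ne_zero_of_tendstoLocallyUniformlyOn_birkhoffAverage {f' : ℂ →L[ℂ] ℂ}
    (hD : IsOpen D) (hF : DifferentiableOn ℂ F D) (hmaps : MapsTo F D D)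
    (ho : (fun z => F z - z) =o[𝓝[D] p] fun z => z - p) (hDp : HasTangentBall D p)
    (hf : DifferentiableOn ℂ f D) (hf1 : ∀ z ∈ D, ‖f z‖ ≤ 1) (hfp : ‖f p‖ = 1)
    (hf' : HasStrictFDerivAt f f' p) {P : ℂ → ℂ} {l : Filter ℕ} [l.NeBot] (hl : l ≤ atTop)
    (hP : TendstoLocallyUniformlyOn (birkhoffAverage ℂ F f) P l D) : ∃ z ∈ D, P z ≠ 0 := by
  by_contra! hPzero
  obtain ⟨c, hc, hcD⟩ := hDp
  obtain ⟨k, hk⟩ := exists_nat_gt ((‖f'‖ + 1) * dist p c)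
  have hsphere : sphere c (dist p c / 2) ⊆ D :=
    (sphere_subset_ball (half_lt_self (dist_pos.2 hc.symm))).trans hcD
  have hunif := (tendstoLocallyUniformlyOn_iff_forall_isCompact hD).1 hP _ hsphere
    (isCompact_sphere _ _)
  obtain ⟨N, hsmall, hN⟩ := ((Metric.tendstoUniformlyOn_iff.1 hunif ((1 / 2) ^ k)
    (by positivity)).and ((eventually_ne_atTop 0).filter_mono hl)).exists
  refine hk.not_ge (natCast_le_mul_dist_of_one_sub_le_norm hc
    ((differentiableOn_birkhoffAverage hF hmaps hf N).mono hcD)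
    (fun z hz => norm_birkhoffAverage_le hmaps hf1 N (hcD hz)) (fun z hz => ?_)
    ((eventually_one_sub_mul_dist_le_norm_birkhoffAverage hf' hfp hmaps ho hN).filter_mono
      (nhdsWithin_mono p hcD)))
  simpa [hPzero z (hsphere hz)] using (hsmall z hz).le

theorem exists_iterate_eqOn_id {f' : ℂ →L[ℂ] ℂ} (hD : IsOpen D) (hconn : IsPreconnected D)
    (hF : DifferentiableOn ℂ F D) (hmaps : MapsTo F D D)
    (ho : (fun z => F z - z) =o[𝓝[D] p] fun z => z - p) (hDp : HasTangentBall D p)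
    {z₀ : ℂ} (hz₀ : z₀ ∈ D) (hfix : F z₀ = z₀) (hf : DifferentiableOn ℂ f D)
    (hf1 : ∀ z ∈ D, ‖f z‖ ≤ 1) (hfp : ‖f p‖ = 1) (hf' : HasStrictFDerivAt f f' p)
    (hf₀ : f z₀ = 0) : ∃ k ≠ 0, EqOn F^[k] id D := by
  obtain ⟨l, P, _, hl, hP, hlim, hinv⟩ :=
    exists_invariant_limit_birkhoffAverage hD hF hmaps hf hf1
  have hPan := hP.analyticOnNhd hD
  have hP₀ : P z₀ = 0 :=
    (tendsto_nhds_unique (hlim.tendsto_at hz₀)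
      ((IsFixedPt.tendsto_birkhoffAverage ℂ (f := F) hfix f).mono_left hl)).trans hf₀
  have hne : ¬ ∀ᶠ z in 𝓝 z₀, P z = P z₀ := by
    intro hconst
    rw [hP₀] at hconst
    obtain ⟨z, hz, hPz⟩ := exists_ne_zero_of_tendstoLocallyUniformlyOn_birkhoffAverage hD hF hmaps
      ho hDp hf hf1 hfp hf' hl hlim
    exact hPz (hPan.eqOn_zero_of_preconnected_of_eventuallyEq_zero hconn hz₀ hconst hz)
  obtain ⟨k, hk, hFk⟩ := exists_iterate_eventuallyEq_id_of_invariant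
    (hF.differentiableAt (hD.mem_nhds hz₀)) hfix (hPan z₀ hz₀)
    (mem_of_superset (hD.mem_nhds hz₀) hinv) hne
  exact ⟨k, hk, ((hF.iterate hmaps k).analyticOnNhd hD).eqOn_of_preconnected_of_eventuallyEq
    (differentiableOn_id.analyticOnNhd hD) hconn hz₀ hFk⟩

end InvariantLimit

section Rigidity

theorem eventually_dist_le_mul_dist_of_isLittleO {E G : Type*} [NormedAddCommGroup E]
    [NormedSpace ℂ E] [NormedAddCommGroup G] [NormedSpace ℂ G] {D : Set E} {g : E → G} {p : E}
    (hg : DifferentiableOn ℂ g D) (ho : g =o[𝓝[D] p] fun z => z - p) {ε : ℝ} (hε : 0 < ε) :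
    ∀ᶠ w in 𝓝 p, w ≠ p → ball w (dist w p / 2) ⊆ D →
      ∀ z ∈ ball w (dist w p / 2), dist (g z) (g w) ≤ ε * dist z w := by
  obtain ⟨δ, hδ, hbound⟩ := Metric.mem_nhdsWithin_iff.1 (ho.bound (by positivity : 0 < ε / 5))
  filter_upwards [ball_mem_nhds p (half_pos hδ)] with w hwδ hwp hwD z hz
  have hd : 0 < dist w p := dist_pos.2 hwp
  rw [mem_ball] at hwδ
  have hsmall (x : E) (hx : x ∈ ball w (dist w p / 2)) : ‖g x‖ ≤ ε / 5 * dist x p := by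
    rw [dist_eq_norm x]
    refine hbound ⟨?_, hwD hx⟩
    rw [mem_ball] at hx ⊢
    linarith [dist_triangle x w p]
  have hmaps : MapsTo g (ball w (dist w p / 2)) (closedBall (g w) (ε * (dist w p / 2))) := by
    intro x hx
    have hxp : dist x p ≤ 3 / 2 * dist w p := by
      linarith [dist_triangle x w p, mem_ball.1 hx]
    rw [mem_closedBall_iff_norm]
    calc ‖g x - g w‖ ≤ ε / 5 * dist x p + ε / 5 * dist w p :=
          norm_sub_le_of_le (hsmall x hx) (hsmall w (mem_ball_self (half_pos hd)))
      _ ≤ ε / 5 * (3 / 2 * dist w p) + ε / 5 * dist w p := by gcongr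
      _ = ε * (dist w p / 2) := by ring
  simpa [mul_div_cancel_right₀ _ (half_pos hd).ne'] using
    Complex.dist_le_div_mul_dist_of_mapsTo_ball (hg.mono hwD) hmaps hz

/-- A map tangent to the identity at `p` is injective on the balls `ball w (dist w p / 2) ⊆ D` with
`w` close to `p`, so `S (F w) = S w` forces `F w = w`. -/
theorem eqOn_id_of_invariant {D : Set ℂ} {F S : ℂ → ℂ} {p : ℂ} (hD : IsOpen D)
    (hconn : IsPreconnected D) (hDp : HasTangentBall D p) (hF : DifferentiableOn ℂ F D)
    (hFo : (fun z => F z - z) =o[𝓝[D] p] fun z => z - p) (hS : DifferentiableOn ℂ S D)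
    (hSo : (fun z => S z - z) =o[𝓝[D] p] fun z => z - p) (hinv : ∀ z ∈ D, S (F z) = S z) :
    EqOn F id D := by
  have hfixed : ∀ᶠ w in 𝓝 p, w ≠ p ∧ ball w (dist w p / 2) ⊆ D → w ∈ D ∧ F w = w := by
    filter_upwards [eventually_nhdsWithin_iff.1 (hFo.bound (by norm_num : (0 : ℝ) < 1 / 4)),
      eventually_dist_le_mul_dist_of_isLittleO (hS.sub differentiableOn_id) hSo one_half_pos]
      with w hFw hcontr ⟨hwp, hball⟩
    have hd : 0 < dist w p := dist_pos.2 hwp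
    have hw : w ∈ D := hball (mem_ball_self (half_pos hd))
    have hFball : F w ∈ ball w (dist w p / 2) := by
      rw [mem_ball, dist_eq_norm (F w)]
      refine (hFw hw).trans_lt ?_
      rw [← dist_eq_norm]
      linarith
    have hhalf : dist (F w) w ≤ 1 / 2 * dist (F w) w := by
      simpa only [Pi.sub_apply, id, hinv w hw, dist_sub_left] using hcontr hwp hball (F w) hFball
    exact ⟨hw, dist_le_zero.1 (by linarith)⟩
  obtain ⟨z, hz, hz'⟩ :=
    (hDp.frequently_eventually_ball_subset.and_eventually hfixed.eventually_nhds).exists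
  refine (hF.analyticOnNhd hD).eqOn_of_preconnected_of_eventuallyEq
    (differentiableOn_id.analyticOnNhd hD) hconn (hz'.self_of_nhds hz.self_of_nhds).1 ?_
  filter_upwards [hz, hz'] with w hw hw' using (hw' hw).2

theorem eqOn_id_of_iterate_eqOn_id {D : Set ℂ} {F : ℂ → ℂ} {p : ℂ} (hD : IsOpen D)
    (hconn : IsPreconnected D) (hDp : HasTangentBall D p) (hF : DifferentiableOn ℂ F D)
    (hmaps : MapsTo F D D) (ho : (fun z => F z - z) =o[𝓝[D] p] fun z => z - p) {k : ℕ}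
    (hk : k ≠ 0) (hFk : EqOn F^[k] id D) : EqOn F id D := by
  refine eqOn_id_of_invariant hD hconn hDp hF ho
    (differentiableOn_birkhoffAverage hF hmaps differentiableOn_id k)
    (birkhoffAverage_sub_isLittleO (hasStrictFDerivAt_id p) hmaps ho hk) fun z hz => ?_
  rw [← sub_eq_zero, birkhoffAverage_apply_sub_birkhoffAverage, hFk hz, id, sub_self, smul_zero]

theorem eqOn_id_of_hasTangentBall {D : Set ℂ} {F : ℂ → ℂ} {p z₀ : ℂ} (hD : IsOpen D)
    (hconn : IsPreconnected D) (hDp : HasTangentBall D p) (hDp' : HasTangentBall Dᶜ p)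
    (hF : DifferentiableOn ℂ F D) (hmaps : MapsTo F D D)
    (ho : (fun z => F z - z) =o[𝓝[D] p] fun z => z - p) (hz₀ : z₀ ∈ D) (hfix : F z₀ = z₀) :
    EqOn F id D := by
  obtain ⟨e, he, heD⟩ := hDp'
  have hs : 0 < ‖p - e‖ := norm_sub_pos_iff.2 he.symm
  have hext (z : ℂ) (hz : z ∈ D) : ‖p - e‖ < ‖z - e‖ := by
    have := closure_minimal heD hD.isClosed_compl
    rw [dist_eq_norm, closure_ball e hs.ne'] at this
    simpa [dist_eq_norm] using fun h => this h hz
  have hz₀e := hext z₀ hz₀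
  obtain ⟨k, hk, hFk⟩ := exists_iterate_eqOn_id hD hconn hF hmaps ho hDp hz₀ hfix
    (f := exteriorBlaschke e ‖p - e‖ z₀)
    (fun z hz => (analyticAt_exteriorBlaschke hs hz₀e
      (hext z hz).le).differentiableAt.differentiableWithinAt)
    (fun z hz => norm_exteriorBlaschke_le_one hs hz₀e (hext z hz).le)
    (norm_exteriorBlaschke_eq_one hs hz₀e rfl)
    (analyticAt_exteriorBlaschke hs hz₀e le_rfl).hasStrictFDerivAt exteriorBlaschke_self
  exact eqOn_id_of_iterate_eqOn_id hD hconn hDp hF hmaps ho hk hFk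

end Rigidity

theorem isLittleO_norm_sub_pow_of_tendsto_norm_div {E G : Type*} [NormedAddCommGroup E]
    [NormedAddCommGroup G] {D : Set E} {f : E → G} {p : E} (hp : p ∉ D) {k : ℕ}
    (hf : Tendsto (fun z => ‖f z‖ / ‖z - p‖ ^ k) (𝓝[D] p) (𝓝 0)) :
    f =o[𝓝[D] p] fun z => ‖z - p‖ ^ k := by
  refine ((Asymptotics.isLittleO_iff_tendsto' ?_).2 hf).of_norm_left
  filter_upwards [self_mem_nhdsWithin] with z hz hzp
  have hne : z - p ≠ 0 := sub_ne_zero.2 (ne_of_mem_of_not_mem hz hp)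
  exact absurd hzp (pow_ne_zero k (norm_ne_zero_iff.2 hne))

theorem huang_dim_one_interior_fixed_point_general {D : Set ℂ} (hD : IsOpen D)
    (hconn : IsPreconnected D) {ρ : ℂ → ℝ} {p : ℂ} (hρ : ContDiffAt ℝ 2 ρ p) (hρp : ρ p = 0)
    (hdρ : fderiv ℝ ρ p ≠ 0) (hDρ : D =ᶠ[𝓝 p] {z | ρ z < 0}) {F : ℂ → ℂ}
    (hF : DifferentiableOn ℂ F D) (hmaps : MapsTo F D D) {z₀ : ℂ} (hz₀ : z₀ ∈ D)
    (hfix : F z₀ = z₀) (ho : (fun z => F z - z) =o[𝓝[D] p] fun z => z - p) :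
    EqOn F id D := by
  have hmem : ∀ᶠ z in 𝓝 p, z ∈ D ↔ ρ z < 0 := hDρ.mem_iff
  have hinterior : HasTangentBall D p :=
    hasTangentBall_of_contDiffAt hρ.neg (by simp [hρp]) (by simpa [fderiv_neg] using hdρ)
      (hmem.mono fun z hz h => hz.2 (neg_pos.1 h))
  have hexterior : HasTangentBall Dᶜ p :=
    hasTangentBall_of_contDiffAt hρ hρp hdρ (hmem.mono fun z hz h hzD => (hz.1 hzD).not_gt h)
  exact eqOn_id_of_hasTangentBall hD hconn hinterior hexterior hF hmaps ho hz₀ hfix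

theorem huang_dim_one_interior_fixed_point
    (D : Set ℂ) (hD : IsOpen D ∧ IsConnected D) (hbd : Bornology.IsBounded D)
    (ρ : ℂ → ℝ)
    (hρ : ContDiff ℝ (⊤ : ℕ∞) ρ ∧ D = {z | ρ z < 0} ∧ frontier D = {z | ρ z = 0} ∧
      ∀ q ∈ frontier D, fderiv ℝ ρ q ≠ 0)
    (p : ℂ) (hp : p ∈ frontier D)
    (F : ℂ → ℂ) (hF : DifferentiableOn ℂ F D) (hFself : MapsTo F D D)
    (z₀ : ℂ) (hz₀ : z₀ ∈ D) (hfix : F z₀ = z₀)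
    (ho : Tendsto (fun z => ‖F z - z‖ / ‖z - p‖ ^ 1) (𝓝[D] p) (𝓝 0)) :
    ∀ z ∈ D, F z = z := by
  obtain ⟨hsmooth, hDρ, hfrontier, hdρ⟩ := hρ
  have hpD : p ∉ D := disjoint_left.1 (disjoint_frontier_iff_isOpen.2 hD.1) hp
  exact huang_dim_one_interior_fixed_point_general hD.1 hD.2.isPreconnected
    (hsmooth.of_le (WithTop.coe_le_coe.2 le_top)).contDiffAt (hfrontier ▸ hp : p ∈ {z | ρ z = 0})
    (hdρ p hp) (EventuallyEq.of_eq hDρ) hF hFself hz₀ hfix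
    (by simpa using isLittleO_norm_sub_pow_of_tendsto_norm_div hpD ho)
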